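/- Let q be odd, m ≥ 4, and 2 ≤ t with 2t ≤ m - 2. For any k with 4 ≤ 2k ≤ m, the quantity w_{2k-2}(2t, m-2) = #{A skew-symmetric (m-2)×(m-2) of rank exactly 2t over F_q : tr(E_{2k-2}A) ≠ 0} satisfies w_{2k-2}(2t, m-2) ≥ (q-1)(q^{m-2t-1} - 1)(q^{m-2t} - 1) q^{m+2t-8} n_a(2t-4, m-4) > 0. -/

import Mathlib

open Matrix
def IsSkewSym {K : Type} [Field K] {m : ℕ} (A : Matrix (Fin m) (Fin m) K) : Prop :=
  Aᵀ = -A ∧ ∀ i, A i i = 0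

def Estd (K : Type) [Field K] (k m : ℕ) : Matrix (Fin m) (Fin m) K :=
  Matrix.of fun i j =>
    if j.val = i.val + 1 ∧ i.val % 2 = 0 ∧ j.val < 2*k then 1
    else if i.val = j.val + 1 ∧ j.val % 2 = 0 ∧ i.val < 2*k then -1 else 0

noncomputable def na (K : Type) [Field K] (r m : ℕ) : ℕ :=
  Nat.card {A : Matrix (Fin m) (Fin m) K // IsSkewSym A ∧ A.rank = r}

noncomputable def Na (K : Type) [Field K] (r m : ℕ) : ℕ :=
  Nat.card {A : Matrix (Fin m) (Fin m) K // IsSkewSym A ∧ A.rank ≤ r}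

noncomputable def wSmall (K : Type) [Field K] (k r m : ℕ) : ℕ :=
  Nat.card {A : Matrix (Fin m) (Fin m) K //
    IsSkewSym A ∧ A.rank = 2*r ∧ Matrix.trace (Estd K k m * A) ≠ 0}

noncomputable def Wcap (K : Type) [Field K] (k t m : ℕ) : ℕ :=
  Nat.card {A : Matrix (Fin m) (Fin m) K //
    IsSkewSym A ∧ A.rank ≤ 2*t ∧ Matrix.trace (Estd K k m * A) ≠ 0}

noncomputable def projWt (K : Type) [Field K] (m t : ℕ)
    (φ : Matrix (Fin m) (Fin m) K →ₗ[K] K) : ℕ :=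
  Nat.card {x : Projectivization K (Matrix (Fin m) (Fin m) K) //
    ∃ (A : Matrix (Fin m) (Fin m) K) (h : A ≠ 0),
      x = Projectivization.mk K A h ∧ IsSkewSym A ∧ A.rank ≤ 2*t ∧ φ A ≠ 0}

/-- The skew-symmetric matrix obtained from `C` by adding `b` as a new first row and `-b` as a new
first column. -/
def border {K : Type} [Field K] {n : ℕ} (b : Fin n → K) (C : Matrix (Fin n) (Fin n) K) :
    Matrix (Fin (n + 1)) (Fin (n + 1)) K :=
  Matrix.of (Fin.cons (Fin.cons 0 b) fun i => Fin.cons (-b i) (C i))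

section Border

variable {K : Type} [Field K] {n : ℕ}

@[simp] lemma border_zero_zero (b : Fin n → K) (C : Matrix (Fin n) (Fin n) K) :
    border b C 0 0 = 0 := rfl

@[simp] lemma border_zero_succ (b : Fin n → K) (C : Matrix (Fin n) (Fin n) K) (j : Fin n) :
    border b C 0 j.succ = b j := rfl

@[simp] lemma border_succ_zero (b : Fin n → K) (C : Matrix (Fin n) (Fin n) K) (i : Fin n) :
    border b C i.succ 0 = -b i := rfl

@[simp] lemma border_succ_succ (b : Fin n → K) (C : Matrix (Fin n) (Fin n) K) (i j : Fin n) :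
    border b C i.succ j.succ = C i j := rfl

lemma IsSkewSym.apply_swap {A : Matrix (Fin n) (Fin n) K} (hA : IsSkewSym A) (i j : Fin n) :
    A j i = -A i j := by
  simpa using congrFun (congrFun hA.1 i) j

lemma isSkewSym_border_iff (b : Fin n → K) (C : Matrix (Fin n) (Fin n) K) :
    IsSkewSym (border b C) ↔ IsSkewSym C := by
  constructor
  · intro h
    refine ⟨?_, fun i => h.2 i.succ⟩
    ext i j
    exact h.apply_swap i.succ j.succ
  · intro h
    refine ⟨?_, fun i => ?_⟩
    · ext i j
      refine Fin.cases ?_ (fun i => ?_) i <;> refine Fin.cases ?_ (fun j => ?_) j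
      · simp
      · simp
      · simp
      · simpa using h.apply_swap i j
    · refine Fin.cases rfl (fun i => h.2 i) i

lemma IsSkewSym.eq_border {A : Matrix (Fin (n + 1)) (Fin (n + 1)) K} (hA : IsSkewSym A) :
    border (fun j => A 0 j.succ) (A.submatrix Fin.succ Fin.succ) = A := by
  ext i j
  refine Fin.cases ?_ (fun i => ?_) i <;> refine Fin.cases ?_ (fun j => ?_) j
  · simp [hA.2 0]
  · simp
  · simp [hA.apply_swap 0 i.succ]
  · simp

/-- Skew-symmetric matrices with a property `P`, as borderings of smaller ones. -/
def skewSymEquivBorder (P : Matrix (Fin (n + 1)) (Fin (n + 1)) K → Prop) :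
    {A : Matrix (Fin (n + 1)) (Fin (n + 1)) K // IsSkewSym A ∧ P A} ≃
      Σ C : {C : Matrix (Fin n) (Fin n) K // IsSkewSym C},
        {b : Fin n → K // P (border b C.1)} where
  toFun A := ⟨⟨A.1.submatrix Fin.succ Fin.succ, by
      have h := A.2.1
      rw [← h.eq_border, isSkewSym_border_iff] at h
      exact h⟩, ⟨fun j => A.1 0 j.succ, by
        have h := A.2.2
        rw [← A.2.1.eq_border] at h
        exact h⟩⟩
  invFun x := ⟨border x.2.1 x.1.1, (isSkewSym_border_iff _ _).2 x.1.2, x.2.2⟩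
  left_inv A := Subtype.ext A.2.1.eq_border
  right_inv _ := rfl

lemma border_mulVec_cons (b : Fin n → K) (C : Matrix (Fin n) (Fin n) K) (y : K) (x : Fin n → K) :
    border b C *ᵥ (Fin.cons y x : Fin (n + 1) → K) =
      (Fin.cons (b ⬝ᵥ x) (C *ᵥ x - y • b) : Fin (n + 1) → K) := by
  ext i
  refine Fin.cases ?_ (fun i => ?_) i
  · simp [mulVec, dotProduct, Fin.sum_univ_succ]
  · simp [mulVec, dotProduct, Fin.sum_univ_succ]
    ring

lemma border_mulVec_cons_eq_zero (b : Fin n → K) (C : Matrix (Fin n) (Fin n) K) (y : K)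
    (x : Fin n → K) :
    border b C *ᵥ (Fin.cons y x : Fin (n + 1) → K) = 0 ↔ b ⬝ᵥ x = 0 ∧ C *ᵥ x = y • b := by
  rw [border_mulVec_cons, ← sub_eq_zero (b := y • b)]
  constructor
  · intro h
    exact ⟨congrFun h 0, funext fun i => congrFun h i.succ⟩
  · rintro ⟨h1, h2⟩
    ext i
    refine Fin.cases h1 (fun i => congrFun h2 i) i

lemma rank_add_finrank_ker (C : Matrix (Fin n) (Fin n) K) :
    C.rank + Module.finrank K (LinearMap.ker C.mulVecLin) = n := by
  have h := C.mulVecLin.finrank_range_add_finrank_ker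
  simpa [Matrix.rank] using h

lemma IsSkewSym.dotProduct_mulVec_comm {C : Matrix (Fin n) (Fin n) K} (hC : IsSkewSym C)
    (v x : Fin n → K) : (C *ᵥ v) ⬝ᵥ x = -(v ⬝ᵥ (C *ᵥ x)) := by
  rw [dotProduct_mulVec, ← mulVec_transpose, hC.1, neg_mulVec, neg_dotProduct, neg_neg]

lemma IsSkewSym.dotProduct_mulVec_self {C : Matrix (Fin n) (Fin n) K} (hC : IsSkewSym C)
    (v : Fin n → K) : v ⬝ᵥ (C *ᵥ v) = 0 := by
  induction n with
  | zero => simp [dotProduct]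
  | succ n ih =>
    obtain ⟨b, D, rfl⟩ : ∃ b D, border b D = C := ⟨_, _, hC.eq_border⟩
    obtain ⟨y, x, rfl⟩ : ∃ y x, (Fin.cons y x : Fin (n + 1) → K) = v :=
      ⟨_, _, Fin.cons_self_tail v⟩
    rw [isSkewSym_border_iff] at hC
    rw [border_mulVec_cons, ← vecCons, ← vecCons, cons_dotProduct_cons, dotProduct_sub, ih hC,
      dotProduct_smul, dotProduct_comm, smul_eq_mul]
    ring

lemma rank_border_of_mem {C : Matrix (Fin n) (Fin n) K} (hC : IsSkewSym C) {b : Fin n → K}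
    (hb : b ∈ LinearMap.range C.mulVecLin) : (border b C).rank = C.rank := by
  obtain ⟨v, rfl⟩ := hb
  rw [mulVecLin_apply]
  have hker (y : K) (x : Fin n → K) :
      border (C *ᵥ v) C *ᵥ (Fin.cons y x : Fin (n + 1) → K) = 0 ↔ C *ᵥ (x - y • v) = 0 := by
    rw [border_mulVec_cons_eq_zero, mulVec_sub, mulVec_smul, sub_eq_zero, and_iff_right_iff_imp]
    intro h
    rw [hC.dotProduct_mulVec_comm, h, dotProduct_smul, hC.dotProduct_mulVec_self, smul_zero,
      neg_zero]
  let e : (K × LinearMap.ker C.mulVecLin) ≃ₗ[K] LinearMap.ker (border (C *ᵥ v) C).mulVecLin :=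
    { toFun p := ⟨Fin.cons p.1 (p.2.1 + p.1 • v), by
        have := p.2.2
        rw [LinearMap.mem_ker, mulVecLin_apply] at this ⊢
        rw [hker]
        simpa using this⟩
      invFun z := ⟨z.1 0, ⟨Fin.tail z.1 - z.1 0 • v, by
        have := z.2
        rw [LinearMap.mem_ker, mulVecLin_apply] at this ⊢
        rwa [← hker, Fin.cons_self_tail]⟩⟩
      map_add' p p' := by
        ext i
        refine Fin.cases ?_ (fun i => ?_) i <;> simp
        ring
      map_smul' c p := by
        ext i
        refine Fin.cases ?_ (fun i => ?_) i <;> simp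
        ring
      left_inv p := by
        ext <;> simp
      right_inv z := by
        ext i
        refine Fin.cases ?_ (fun i => ?_) i <;> simp [Fin.tail] }
  have h := e.finrank_eq
  rw [Module.finrank_prod, Module.finrank_self] at h
  have h1 := rank_add_finrank_ker C
  have h2 := rank_add_finrank_ker (border (C *ᵥ v) C)
  omega

lemma IsSkewSym.mem_range_of_forall_ker {C : Matrix (Fin n) (Fin n) K} (hC : IsSkewSym C)
    {b : Fin n → K} (h : ∀ x, C *ᵥ x = 0 → b ⬝ᵥ x = 0) : b ∈ LinearMap.range C.mulVecLin := by
  let f : Module.Dual K (Fin n → K) := dotProductEquiv K (Fin n) b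
  have hf : f ∈ (LinearMap.ker C.mulVecLin).dualAnnihilator := by
    rw [Submodule.mem_dualAnnihilator]
    intro x hx
    exact h x hx
  rw [← LinearMap.range_dualMap_eq_dualAnnihilator_ker] at hf
  obtain ⟨g, hg⟩ := hf
  obtain ⟨w, rfl⟩ := (dotProductEquiv K (Fin n)).surjective g
  refine ⟨-w, (dotProductEquiv K (Fin n)).injective ?_⟩
  change _ = f
  rw [← hg]
  refine LinearMap.ext fun x => ?_
  simp [hC.dotProduct_mulVec_comm, mulVec_neg]

lemma rank_border_of_notMem {C : Matrix (Fin n) (Fin n) K} (hC : IsSkewSym C) {b : Fin n → K}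
    (hb : b ∉ LinearMap.range C.mulVecLin) : (border b C).rank = C.rank + 2 := by
  obtain ⟨x₀, hx₀, hbx₀⟩ : ∃ x, C *ᵥ x = 0 ∧ b ⬝ᵥ x ≠ 0 := by
    by_contra! h
    exact hb (hC.mem_range_of_forall_ker h)
  let f : LinearMap.ker C.mulVecLin →ₗ[K] K :=
    (dotProductEquiv K (Fin n) b).comp (LinearMap.ker C.mulVecLin).subtype
  have hf (x : LinearMap.ker C.mulVecLin) : f x = b ⬝ᵥ x.1 := rfl
  have hf0 : f ≠ 0 := fun h => hbx₀ (by simpa [hf] using LinearMap.congr_fun h ⟨x₀, hx₀⟩)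
  have hker (y : K) (x : Fin n → K) :
      border b C *ᵥ (Fin.cons y x : Fin (n + 1) → K) = 0 ↔ y = 0 ∧ C *ᵥ x = 0 ∧ b ⬝ᵥ x = 0 := by
    rw [border_mulVec_cons_eq_zero]
    constructor
    · rintro ⟨h1, h2⟩
      have hy : y = 0 := by
        by_contra hy
        refine hb ⟨y⁻¹ • x, ?_⟩
        rw [mulVecLin_apply, mulVec_smul, h2, inv_smul_smul₀ hy]
      exact ⟨hy, by rw [h2, hy, zero_smul], h1⟩
    · rintro ⟨rfl, h1, h2⟩
      exact ⟨h2, by rw [h1, zero_smul]⟩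
  let e : LinearMap.ker f ≃ₗ[K] LinearMap.ker (border b C).mulVecLin :=
    { toFun p := ⟨Fin.cons 0 p.1.1, by
        rw [LinearMap.mem_ker, mulVecLin_apply, hker]
        exact ⟨rfl, p.1.2, p.2⟩⟩
      invFun z :=
        have hz : z.1 0 = 0 ∧ C *ᵥ Fin.tail z.1 = 0 ∧ b ⬝ᵥ Fin.tail z.1 = 0 := by
          rw [← hker, Fin.cons_self_tail]
          exact z.2
        ⟨⟨Fin.tail z.1, hz.2.1⟩, hz.2.2⟩
      map_add' p p' := by
        ext i
        refine Fin.cases ?_ (fun i => ?_) i <;> simp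
      map_smul' c p := by
        ext i
        refine Fin.cases ?_ (fun i => ?_) i <;> simp
      left_inv p := by
        ext
        simp [Fin.tail]
      right_inv z := by
        have hz : z.1 0 = 0 := by
          have h := z.2
          rw [LinearMap.mem_ker, mulVecLin_apply, ← Fin.cons_self_tail z.1, hker] at h
          exact h.1
        ext i
        refine Fin.cases ?_ (fun i => ?_) i <;> simp [Fin.tail, hz] }
  have h := e.finrank_eq
  have hr : Module.finrank K (LinearMap.range f) = 1 := by
    rw [LinearMap.range_eq_top.2 (LinearMap.surjective hf0), finrank_top, Module.finrank_self]
  have h0 := f.finrank_range_add_finrank_ker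
  have h1 := rank_add_finrank_ker C
  have h2 := rank_add_finrank_ker (border b C)
  omega

lemma rank_border_eq_iff {C : Matrix (Fin n) (Fin n) K} (hC : IsSkewSym C) (b : Fin n → K)
    (r : ℕ) : (border b C).rank = r ↔ (C.rank = r ∧ b ∈ LinearMap.range C.mulVecLin) ∨
      (C.rank + 2 = r ∧ b ∉ LinearMap.range C.mulVecLin) := by
  by_cases hb : b ∈ LinearMap.range C.mulVecLin
  · simp [rank_border_of_mem hC hb, hb]
  · simp [rank_border_of_notMem hC hb, hb]

lemma trace_Estd_mul_border {j : ℕ} (hj : 1 ≤ j) (b : Fin (n + 1) → K)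
    (C : Matrix (Fin (n + 1)) (Fin (n + 1)) K) :
    trace (Estd K j (n + 2) * border b C) =
      trace (Estd K j (n + 2) * border 0 C) - 2 * b 0 := by
  have hsplit : border b C = border 0 C + border b 0 := by
    ext i k
    refine Fin.cases ?_ (fun i => ?_) i <;> refine Fin.cases ?_ (fun k => ?_) k <;> simp
  have hb : trace (Estd K j (n + 2) * border b 0) = -(2 * b 0) := by
    have h01 : Estd K j (n + 2) 0 (Fin.succ 0) = 1 := by simp [Estd]; omega
    have h10 : Estd K j (n + 2) (Fin.succ 0) 0 = -1 := by simp [Estd]; omega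
    have h0 (i : Fin n) : Estd K j (n + 2) 0 i.succ.succ = 0 := by simp [Estd]
    have h0' (i : Fin n) : Estd K j (n + 2) i.succ.succ 0 = 0 := by simp [Estd]
    simp only [trace, diag, mul_apply]
    rw [Fin.sum_univ_succ, Fin.sum_univ_succ]
    simp only [Fin.sum_univ_succ (n := n + 1), border_zero_zero, border_succ_zero,
      border_zero_succ, border_succ_succ, Matrix.zero_apply, mul_zero, Finset.sum_const_zero, add_zero,
      zero_add]
    rw [Fin.sum_univ_succ, Fin.sum_univ_succ, h01, h10]
    simp only [h0, h0', zero_mul, Finset.sum_const_zero]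
    ring
  rw [hsplit, mul_add, trace_add, hb, sub_eq_add_neg]

end Border

/-- The type of skew-symmetric matrices. -/
abbrev SkewSym (K : Type) [Field K] (n : ℕ) : Type :=
  {C : Matrix (Fin n) (Fin n) K // IsSkewSym C}

section Count

variable {K : Type} [Field K] {n : ℕ}

lemma card_subtype_add_card_subtype_not {α : Type} [Finite α] (P : α → Prop) :
    Nat.card {a // P a} + Nat.card {a // ¬P a} = Nat.card α := by
  classical
  rw [← Nat.card_sum, Nat.card_congr (Equiv.sumCompl P)]

lemma card_mem_range_mulVecLin (C : Matrix (Fin n) (Fin n) K) :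
    Nat.card {b : Fin n → K // b ∈ LinearMap.range C.mulVecLin} = Nat.card K ^ C.rank :=
  Module.natCard_eq_pow_finrank (K := K) (V := LinearMap.range C.mulVecLin)

lemma na_zero (n : ℕ) : na K 0 n = 1 := by
  rw [na, Nat.card_eq_one_iff_unique]
  refine ⟨⟨fun A B => Subtype.ext ?_⟩, ⟨0, ⟨by simp, by simp⟩, by simp⟩⟩
  have h (M : Matrix (Fin n) (Fin n) K) (hM : M.rank = 0) : M = 0 := by
    rw [Matrix.rank, Submodule.finrank_eq_zero, LinearMap.range_eq_bot] at hM
    exact Matrix.toLin'.map_eq_zero_iff.1 hM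
  rw [h _ A.2.2, h _ B.2.2]

lemma na_eq_zero_of_lt {r n : ℕ} (h : n < r) : na K r n = 0 := by
  rw [na, Nat.card_eq_zero]
  refine Or.inl ⟨fun A => ?_⟩
  have h1 := A.1.rank_le_width
  have h2 := A.2.2
  omega

lemma card_linearMap_ne {W : Type} [AddCommGroup W] [Module K W] [Finite W] {f : W →ₗ[K] K}
    (hf : f ≠ 0) {d : ℕ} (hd : Module.finrank K W = d + 1) (c : K) :
    (Nat.card {x // f x ≠ c} : ℤ) = ((Nat.card K : ℤ) - 1) * (Nat.card K : ℤ) ^ d := by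
  obtain ⟨x₀, hx₀⟩ := LinearMap.surjective hf c
  let e : LinearMap.ker f ≃ {x // f x = c} :=
    (Equiv.addRight x₀).subtypeEquiv fun x => by simp [hx₀]
  have hker : Module.finrank K (LinearMap.ker f) = d := by
    have h := f.finrank_range_add_finrank_ker
    rw [LinearMap.range_eq_top.2 (LinearMap.surjective hf), finrank_top, Module.finrank_self] at h
    omega
  have h := card_subtype_add_card_subtype_not fun x => f x = c
  rw [← Nat.card_congr e, Module.natCard_eq_pow_finrank (K := K) (V := LinearMap.ker f), hker,
    Module.natCard_eq_pow_finrank (K := K) (V := W), hd] at h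
  zify at h
  linear_combination h

variable [Finite K]

noncomputable instance : Fintype (SkewSym K n) := Fintype.ofFinite _

lemma card_skewSym_and (P : Matrix (Fin n) (Fin n) K → Prop) [DecidablePred P] :
    Nat.card {A : Matrix (Fin n) (Fin n) K // IsSkewSym A ∧ P A} =
      ∑ C : SkewSym K n, if P C.1 then 1 else 0 := by
  rw [← Nat.card_congr (Equiv.subtypeSubtypeEquivSubtypeInter IsSkewSym P), Nat.card_eq_fintype_card,
    Fintype.card_subtype, Finset.card_filter]

lemma card_skewSym_succ_and (P : Matrix (Fin (n + 1)) (Fin (n + 1)) K → Prop) :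
    Nat.card {A : Matrix (Fin (n + 1)) (Fin (n + 1)) K // IsSkewSym A ∧ P A} =
      ∑ C : SkewSym K n, Nat.card {b : Fin n → K // P (border b C.1)} := by
  rw [Nat.card_congr (skewSymEquivBorder P), Nat.card_sigma]

lemma card_rank_border_add_two {C : Matrix (Fin n) (Fin n) K} (hC : IsSkewSym C) (r : ℕ) :
    (Nat.card {b : Fin n → K // (border b C).rank = r + 2} : ℤ) =
      (Nat.card K : ℤ) ^ (r + 2) * (if C.rank = r + 2 then 1 else 0) +
        ((Nat.card K : ℤ) ^ n - (Nat.card K : ℤ) ^ r) * (if C.rank = r then 1 else 0) := by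
  simp only [rank_border_eq_iff hC]
  by_cases h2 : C.rank = r + 2
  · simp [h2, -LinearMap.mem_range, card_mem_range_mulVecLin]
  · by_cases h0 : C.rank = r
    · have h := card_subtype_add_card_subtype_not fun b => b ∈ LinearMap.range C.mulVecLin
      rw [card_mem_range_mulVecLin, h0, Nat.card_fun, Nat.card_fin] at h
      simp only [h0, Nat.left_eq_add, OfNat.ofNat_ne_zero, false_and, true_and, false_or, ite_true,
        ite_false, mul_zero, mul_one, zero_add]
      rw [eq_sub_iff_add_eq']
      exact_mod_cast h
    · simp [h2, h0]

lemma na_eq_sum (r : ℕ) : na K r n = ∑ C : SkewSym K n, if C.1.rank = r then 1 else 0 := by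
  rw [na, card_skewSym_and]

lemma na_add_two_succ (r n : ℕ) :
    (na K (r + 2) (n + 1) : ℤ) = (Nat.card K : ℤ) ^ (r + 2) * na K (r + 2) n +
      ((Nat.card K : ℤ) ^ n - (Nat.card K : ℤ) ^ r) * na K r n := by
  rw [na, card_skewSym_succ_and, Nat.cast_sum, na_eq_sum, na_eq_sum]
  push_cast
  rw [Finset.mul_sum, Finset.mul_sum, ← Finset.sum_add_distrib]
  exact Finset.sum_congr rfl fun C _ => card_rank_border_add_two C.2 r

/-- Comparison of the numbers of skew-symmetric matrices of consecutive even ranks. -/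
lemma na_two_mul_ratio (n s : ℕ) :
    ((Nat.card K : ℤ) ^ n - (Nat.card K : ℤ) ^ (2 * s)) *
        ((Nat.card K : ℤ) ^ n - (Nat.card K : ℤ) ^ (2 * s + 1)) * na K (2 * s) n =
      (Nat.card K : ℤ) ^ (2 * s + 1) * ((Nat.card K : ℤ) ^ (2 * s + 2) - 1) *
        na K (2 * s + 2) n := by
  induction n generalizing s with
  | zero =>
    rw [na_eq_zero_of_lt (by omega : 0 < 2 * s + 2)]
    rcases Nat.eq_zero_or_pos s with rfl | hs
    · simp
    · rw [na_eq_zero_of_lt (by omega : 0 < 2 * s)]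
      simp
  | succ n ih =>
    have h := ih s
    rw [na_add_two_succ]
    cases s with
    | zero =>
      simp only [mul_zero, na_zero] at h ⊢
      linear_combination (Nat.card K : ℤ) ^ 2 * h
    | succ s =>
      have h' := ih s
      rw [show 2 * (s + 1) = 2 * s + 2 by ring] at h ⊢
      rw [na_add_two_succ]
      linear_combination (Nat.card K : ℤ) ^ (2 * s + 4) * h + (Nat.card K : ℤ) ^ 2 *
        ((Nat.card K : ℤ) ^ n - (Nat.card K : ℤ) ^ (2 * s + 2)) * h'

lemma na_two_mul_pos {n s : ℕ} (h : 2 * s ≤ n) : 0 < na K (2 * s) n := by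
  induction n generalizing s with
  | zero => simp [show s = 0 by omega, na_zero]
  | succ n ih =>
    cases s with
    | zero => simp [na_zero]
    | succ s =>
      have hq : (1 : ℤ) < Nat.card K := by exact_mod_cast Finite.one_lt_card
      have h1 : (0 : ℤ) < na K (2 * s) n := by exact_mod_cast ih (by omega)
      have h2 : (Nat.card K : ℤ) ^ (2 * s) < (Nat.card K : ℤ) ^ n :=
        pow_lt_pow_right₀ hq (by omega)
      have h3 : (0 : ℤ) < na K (2 * s + 2) (n + 1) := by
        rw [na_add_two_succ]
        have := mul_pos (sub_pos.2 h2) h1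
        positivity
      exact_mod_cast h3

lemma card_apply_zero_ne (c : K) :
    (Nat.card {b : Fin (n + 1) → K // b 0 ≠ c} : ℤ) =
      ((Nat.card K : ℤ) - 1) * (Nat.card K : ℤ) ^ n := by
  refine card_linearMap_ne (f := LinearMap.proj (R := K) (φ := fun _ : Fin (n + 1) => K) 0) ?_
    (by simp) c
  exact fun h => one_ne_zero (LinearMap.congr_fun h 1)

lemma card_mem_range_and_apply_zero_ne {C : Matrix (Fin (n + 1)) (Fin (n + 1)) K} 
    (hC : ¬∀ i, C 0 i = 0) {r : ℕ} (hr : C.rank = r + 1) (c : K) :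
    (Nat.card {b : Fin (n + 1) → K // b ∈ LinearMap.range C.mulVecLin ∧ b 0 ≠ c} : ℤ) =
      ((Nat.card K : ℤ) - 1) * (Nat.card K : ℤ) ^ r := by
  rw [← Nat.card_congr (Equiv.subtypeSubtypeEquivSubtypeInter _ fun b : Fin (n + 1) → K => b 0 ≠ c)]
  refine card_linearMap_ne (f := (LinearMap.proj (R := K) (φ := fun _ : Fin (n + 1) => K) 0).comp
    (LinearMap.range C.mulVecLin).subtype) ?_ hr c
  obtain ⟨i, hi⟩ := not_forall.1 hC
  intro h
  refine hi ?_
  simpa using LinearMap.congr_fun h ⟨C *ᵥ Pi.single i 1, Pi.single i 1, rfl⟩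

lemma card_notMem_range_and_apply_zero_ne (C : Matrix (Fin (n + 1)) (Fin (n + 1)) K) (c : K) :
    (Nat.card {b : Fin (n + 1) → K // b ∉ LinearMap.range C.mulVecLin ∧ b 0 ≠ c} : ℤ) =
      ((Nat.card K : ℤ) - 1) * (Nat.card K : ℤ) ^ n -
        Nat.card {b : Fin (n + 1) → K // b ∈ LinearMap.range C.mulVecLin ∧ b 0 ≠ c} := by
  have h := card_subtype_add_card_subtype_not fun b : {b : Fin (n + 1) → K // b 0 ≠ c} =>
    b.1 ∈ LinearMap.range C.mulVecLin
  rw [Nat.card_congr (Equiv.subtypeSubtypeEquivSubtypeInter _ fun b : Fin (n + 1) → K =>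
      b ∈ LinearMap.range C.mulVecLin),
    Nat.card_congr (Equiv.subtypeSubtypeEquivSubtypeInter _ fun b : Fin (n + 1) → K =>
      b ∉ LinearMap.range C.mulVecLin)] at h
  simp only [and_comm (b := _ ∈ _), and_comm (b := _ ∉ _)] at h
  rw [← card_apply_zero_ne, ← h]
  push_cast
  ring

open Classical in
lemma le_card_rank_border_and_apply_zero_ne {C : Matrix (Fin (n + 1)) (Fin (n + 1)) K}
    (hC : IsSkewSym C) (r : ℕ) (c : K) :
    ((Nat.card K : ℤ) - 1) * (Nat.card K : ℤ) ^ (r + 2) *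
          ((if C.rank = r + 3 then 1 else 0) - (if C.rank = r + 3 ∧ ∀ i, C 0 i = 0 then 1 else 0)) +
        ((Nat.card K : ℤ) - 1) * ((Nat.card K : ℤ) ^ n - (Nat.card K : ℤ) ^ r) *
          ((if C.rank = r + 1 then 1 else 0) - (if C.rank = r + 1 ∧ ∀ i, C 0 i = 0 then 1 else 0)) +
        (((Nat.card K : ℤ) - 1) * (Nat.card K : ℤ) ^ n - (Nat.card K : ℤ) ^ (r + 1)) *
          (if C.rank = r + 1 ∧ ∀ i, C 0 i = 0 then 1 else 0) ≤
      Nat.card {b : Fin (n + 1) → K // (border b C).rank = r + 3 ∧ b 0 ≠ c} := by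
  simp only [rank_border_eq_iff hC]
  by_cases h3 : C.rank = r + 3
  · by_cases h0 : ∀ i, C 0 i = 0
    · simp [h3, h0]
    · have h := card_mem_range_and_apply_zero_ne h0 h3 c
      simp only [h3, h0]
      simp [-LinearMap.mem_range, -ne_eq, h]
  · by_cases h1 : C.rank = r + 1
    · have h := card_notMem_range_and_apply_zero_ne C c
      by_cases h0 : ∀ i, C 0 i = 0
      · have h' : Nat.card {b : Fin (n + 1) → K // b ∈ LinearMap.range C.mulVecLin ∧ b 0 ≠ c} ≤
            Nat.card K ^ (r + 1) := by
          rw [← h1, ← card_mem_range_mulVecLin]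
          exact Nat.card_le_card_of_injective _ (Subtype.impEmbedding _ _ fun b hb => hb.1).injective
        zify at h'
        simp only [h1, h0]
        simp [-LinearMap.mem_range, -ne_eq, h]
        linarith
      · rw [card_mem_range_and_apply_zero_ne h0 h1 c] at h
        simp only [h1, h0]
        simp [-LinearMap.mem_range, -ne_eq, h]
        linarith
    · simp [h1, h3]

open Classical in
lemma sum_rank_eq_and_row_zero (r : ℕ) :
    (∑ C : SkewSym K (n + 1), if C.1.rank = r ∧ ∀ i, C.1 0 i = 0 then 1 else 0) = na K r n := by
  refine (card_skewSym_and fun C => C.rank = r ∧ ∀ i, C 0 i = 0).symm.trans ?_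
  rw [card_skewSym_succ_and, na_eq_sum]
  refine Finset.sum_congr rfl fun C _ => ?_
  have h0 (b : Fin n → K) : (∀ i, border b C.1 0 i = 0) ↔ b = 0 := by
    constructor
    · exact fun h => funext fun i => h i.succ
    · rintro rfl
      exact fun i => Fin.cases rfl (fun _ => rfl) i
  have hr : (border 0 C.1).rank = C.1.rank := rank_border_of_mem C.2 (Submodule.zero_mem _)
  split_ifs with h
  · rw [Nat.card_eq_one_iff_unique]
    refine ⟨⟨fun a b => Subtype.ext ?_⟩, ⟨0, by rw [hr, h], (h0 0).2 rfl⟩⟩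
    rw [(h0 _).1 a.2.2, (h0 _).1 b.2.2]
  · rw [Nat.card_eq_zero]
    refine Or.inl ⟨fun b => h ?_⟩
    rw [← hr, ← (h0 _).1 b.2.2, b.2.1]

lemma le_wSmall (h2 : (2 : K) ≠ 0) {j : ℕ} (hj : 1 ≤ j) (s n : ℕ) :
    ((Nat.card K : ℤ) - 1) * (Nat.card K : ℤ) ^ (2 * s + 3) *
          (na K (2 * s + 4) (n + 1) - na K (2 * s + 4) n) +
        ((Nat.card K : ℤ) - 1) * ((Nat.card K : ℤ) ^ n - (Nat.card K : ℤ) ^ (2 * s + 1)) *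
          (na K (2 * s + 2) (n + 1) - na K (2 * s + 2) n) +
        (((Nat.card K : ℤ) - 1) * (Nat.card K : ℤ) ^ n - (Nat.card K : ℤ) ^ (2 * s + 2)) *
          na K (2 * s + 2) n ≤ wSmall K j (s + 2) (n + 2) := by
  classical
  rw [wSmall, card_skewSym_succ_and, na_eq_sum (n := n + 1), na_eq_sum (n := n + 1),
    ← sum_rank_eq_and_row_zero, ← sum_rank_eq_and_row_zero]
  push_cast
  rw [← Finset.sum_sub_distrib, ← Finset.sum_sub_distrib, Finset.mul_sum, Finset.mul_sum,
    Finset.mul_sum, ← Finset.sum_add_distrib, ← Finset.sum_add_distrib]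
  refine Finset.sum_le_sum fun C _ => ?_
  have hP (b : Fin (n + 1) → K) : trace (Estd K j (n + 2) * border b C.1) ≠ 0 ↔
      b 0 ≠ trace (Estd K j (n + 2) * border 0 C.1) / 2 := by
    rw [trace_Estd_mul_border hj, sub_ne_zero, ne_comm, ne_eq, ne_eq, eq_div_iff h2, mul_comm]
  simp only [hP]
  exact le_card_rank_border_and_apply_zero_ne C.2 (2 * s + 1) _

lemma wSmall_lower_bound (h2 : (2 : K) ≠ 0) {j : ℕ} (hj : 1 ≤ j) (s d : ℕ) :
    ((Nat.card K : ℤ) - 1) * ((Nat.card K : ℤ) ^ (d + 1) - 1) * ((Nat.card K : ℤ) ^ (d + 2) - 1) *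
        (Nat.card K : ℤ) ^ (4 * s + 2 + d) * na K (2 * s) (2 * s + 2 + d) ≤
      wSmall K j (s + 2) (2 * s + 2 + d + 2) := by
  have hq : (2 : ℤ) ≤ Nat.card K := by exact_mod_cast Finite.one_lt_card
  have hw := le_wSmall h2 hj s (2 * s + 2 + d)
  have hratio := na_two_mul_ratio (K := K) (2 * s + 2 + d) s
  rw [na_add_two_succ (2 * s + 2), na_add_two_succ (2 * s)] at hw
  generalize hX : (na K (2 * s + 2) (2 * s + 2 + d) : ℤ) = X at *
  generalize hY : (na K (2 * s) (2 * s + 2 + d) : ℤ) = Y at *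
  generalize hZ : (na K (2 * s + 2 + 2) (2 * s + 2 + d) : ℤ) = Z at *
  have hX0 : 0 ≤ X := hX ▸ Nat.cast_nonneg _
  have hZ0 : 0 ≤ Z := hZ ▸ Nat.cast_nonneg _
  simp only [show 4 * s = 2 * s + 2 * s by ring, pow_add, pow_one] at hw hratio ⊢
  have hP : (1 : ℤ) ≤ (Nat.card K : ℤ) ^ (2 * s) := one_le_pow₀ (by linarith)
  have hQ : (1 : ℤ) ≤ (Nat.card K : ℤ) ^ d := one_le_pow₀ (by linarith)
  generalize (Nat.card K : ℤ) ^ (2 * s) = P at *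
  generalize (Nat.card K : ℤ) ^ d = Q at *
  generalize (Nat.card K : ℤ) = q at *
  have hq1 : 0 ≤ q - 1 := by linarith
  have hq0 : 0 ≤ q := by linarith
  have hP0 : 0 ≤ P := by linarith
  have h1 : 0 ≤ (q - 1) * P ^ 2 * q ^ 5 * (Q - 1) * X := by
    have : 0 ≤ Q - 1 := by linarith
    positivity
  have h2 : 0 ≤ P * q ^ 2 * ((q - 1) * Q - 1) * X := by
    have : 0 ≤ (q - 1) * Q - 1 := by nlinarith
    positivity
  have h3 : 0 ≤ (q - 1) * P * q ^ 3 * (P * q ^ 4 - 1) * Z := by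
    have : 0 ≤ P * q ^ 4 - 1 := by
      have := one_le_mul_of_one_le_of_one_le hP (one_le_pow₀ (by linarith : 1 ≤ q) (n := 4))
      linarith
    positivity
  linear_combination (q - 1) * (q * Q - 1) * hratio + h1 + h2 + h3 + hw

end Count

theorem stmt19 (K : Type) [Field K] [Fintype K] (hchar : ringChar K ≠ 2)
    (m t k : ℕ) (hm : 4 ≤ m) (ht : 2 ≤ t) (htm : 2*t ≤ m - 2)
    (hk : 2 ≤ k) (hkm : 2*k ≤ m) :
    (Fintype.card K - 1) * (Fintype.card K ^ (m - 2*t - 1) - 1)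
        * (Fintype.card K ^ (m - 2*t) - 1) * Fintype.card K ^ (m + 2*t - 8)
        * na K (2*t - 4) (m - 4) ≤ wSmall K (k-1) t (m-2)
      ∧ 0 < wSmall K (k-1) t (m-2) := by
  obtain ⟨s, rfl⟩ : ∃ s, t = s + 2 := ⟨t - 2, by omega⟩
  obtain ⟨d, rfl⟩ : ∃ d, m = 2 * s + 2 + d + 4 := ⟨m - (2 * s + 6), by omega⟩
  have hw := wSmall_lower_bound (Ring.two_ne_zero hchar) (j := k - 1) (by omega) s d
  have hq : 2 ≤ Nat.card K := Finite.one_lt_card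
  have hn : 0 < na K (2 * s) (2 * s + 2 + d) := na_two_mul_pos (by omega)
  rw [show 2 * s + 2 + d + 4 - 2 * (s + 2) - 1 = d + 1 by omega,
    show 2 * s + 2 + d + 4 - 2 * (s + 2) = d + 2 by omega,
    show 2 * s + 2 + d + 4 + 2 * (s + 2) - 8 = 4 * s + 2 + d by omega,
    show 2 * (s + 2) - 4 = 2 * s by omega, show 2 * s + 2 + d + 4 - 4 = 2 * s + 2 + d by omega,
    show 2 * s + 2 + d + 4 - 2 = 2 * s + 2 + d + 2 by omega, ← Nat.card_eq_fintype_card]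
  have hpow (e : ℕ) : 1 < Nat.card K ^ (e + 1) := Nat.one_lt_pow (by omega) hq
  have hle : (Nat.card K - 1) * (Nat.card K ^ (d + 1) - 1) * (Nat.card K ^ (d + 2) - 1) *
      Nat.card K ^ (4 * s + 2 + d) * na K (2 * s) (2 * s + 2 + d) ≤
        wSmall K (k - 1) (s + 2) (2 * s + 2 + d + 2) := by
    zify [(by omega : 1 ≤ Nat.card K), (hpow d).le, (hpow (d + 1)).le]
    exact hw
  refine ⟨hle, lt_of_lt_of_le ?_ hle⟩
  have h1 := Nat.sub_pos_of_lt (hpow d)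
  have h2 := Nat.sub_pos_of_lt (hpow (d + 1))
  have h3 : 0 < Nat.card K - 1 := by omega
  have h4 : 0 < Nat.card K := by omega
  positivity
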